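/- Fix d, n ∈ ℕ, T > 0, p ∈ (1,∞), α ∈ (0,1) and A > 0. There exists a constant C, depending only on d, n, p, α and A, and for each R ∈ (0,1] a constant C_R, depending additionally on R and T, such that the following holds: for every x_0 ∈ ℝ^d, every smooth κ : [0,T] → [0,1], and every map u = (u^1,…,u^n) : [0,T]×ℝ^d → ℝ^n, continuous and twice continuously differentiable in x, with ||u||_{L^∞} ≤ A, sup_{t∈[0,T]} sup_{x≠x'} |u(t,x)−u(t,x')|/|x−x'|^α ≤ A, and ∫_0^T ∫_{B_{4R}(x_0)} (|Du|^{2p} + |D²u|^p) dx dt < ∞, one has ∫_0^T ∫_{B_{2R}(x_0)} κ(t)^p |Du(t,x)|^{2p} dx dt ≤ C R^α ( ∫_0^T ∫_{B_{4R}(x_0)} κ(t)^p |D²u(t,x)|^p dx dt + ∫_0^T ∫_{B_{4R}(x_0)} κ(t)^p |Du(t,x)|^{2p} dx dt ) + C_R. -/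

import Mathlib

open Set MeasureTheory

noncomputable section

/-- `ℝ^d` with the Euclidean norm. -/
abbrev Ed (d : ℕ) := EuclideanSpace ℝ (Fin d)

/-- Euclidean norm of a tuple `z = (z^1, …, z^n) ∈ (ℝ^d)^n`. -/
def znorm {n d : ℕ} (z : Fin n → Ed d) : ℝ := Real.sqrt (∑ i, ‖z i‖ ^ 2)

/-- Euclidean norm of a tuple of `d × d` matrices (all second derivatives). -/
def hnorm {n d : ℕ} (H : Fin n → Matrix (Fin d) (Fin d) ℝ) : ℝ :=
  Real.sqrt (∑ i, ∑ j, ∑ l, (H i j l) ^ 2)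

/-!
Let `η` be a cutoff between `B_{2R}` and `B_{4R}`. On each time slice, test the gradient against
the flux `(1 + |Dv|²)^(p-1) ∂_j v^i`: since `∂_j v^i` is the derivative of `v^i - v^i(x₀)`,
integration by parts moves `∂_j` onto `η (1 + |Dv|²)^(p-1) ∂_j v^i` and leaves a factor
`|v^i - v^i(x₀)| ≤ A (4R)^α`. The differentiated term is of order
`(1 + |Dv|²)^(p-1) (|D²v| + |∇η| |Dv|)`, which Young's inequality bounds by
`|D²v|^p + |Dv|^(2p)` up to a constant. Regularizing `|Dv|²` to `1 + |Dv|²` makes the weight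
smooth even at the zeros of `Dv`. Finally integrate in time against `κ^p ≤ 1`.
-/

lemma rpow_sub_one_mul_le_add {p x y : ℝ} (hp : 1 ≤ p) (hx : 0 ≤ x) (hy : 0 ≤ y) :
    y ^ (p - 1) * x ≤ x ^ p + y ^ p := by
  have hp0 : p - 1 + 1 ≠ 0 := by linarith
  calc y ^ (p - 1) * x
      ≤ max x y ^ (p - 1) * max x y := by
        gcongr
        exacts [le_max_right x y, le_max_left x y]
    _ = max x y ^ p := by
        rw [← Real.rpow_add_one' (hx.trans (le_max_left x y)) hp0, sub_add_cancel]
    _ ≤ x ^ p + y ^ p := by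
        rcases max_choice x y with h | h <;> rw [h]
        exacts [le_add_of_nonneg_right (Real.rpow_nonneg hy p),
          le_add_of_nonneg_left (Real.rpow_nonneg hx p)]

lemma one_add_sq_rpow_le {p s : ℝ} (hp : 0 ≤ p) (hs : 0 ≤ s) :
    (1 + s ^ 2) ^ p ≤ 2 ^ p * (1 + s ^ (2 * p)) := by
  have hsq : s ^ (2 * p) = (s ^ 2) ^ p := by rw [Real.rpow_mul hs, Real.rpow_two]
  rw [hsq]
  calc (1 + s ^ 2) ^ p
      ≤ (2 * max 1 (s ^ 2)) ^ p := by
        gcongr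
        linarith [le_max_left 1 (s ^ 2), le_max_right 1 (s ^ 2)]
    _ = 2 ^ p * max 1 (s ^ 2) ^ p := Real.mul_rpow (by norm_num) (by positivity)
    _ ≤ 2 ^ p * (1 + (s ^ 2) ^ p) := by
        gcongr
        rcases max_choice 1 (s ^ 2) with h | h <;> rw [h]
        · simpa using Real.rpow_nonneg (sq_nonneg s) p
        · simp

section Norms

variable {n d : ℕ}

lemma znorm_nonneg (z : Fin n → Ed d) : 0 ≤ znorm z := Real.sqrt_nonneg _

lemma hnorm_nonneg (H : Fin n → Matrix (Fin d) (Fin d) ℝ) : 0 ≤ hnorm H := Real.sqrt_nonneg _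

lemma znorm_sq (z : Fin n → Ed d) : znorm z ^ 2 = ∑ i, ∑ j, z i j ^ 2 := by
  rw [znorm, Real.sq_sqrt (by positivity)]
  simp only [EuclideanSpace.norm_sq_eq, Real.norm_eq_abs, sq_abs]

lemma abs_apply_le_znorm (z : Fin n → Ed d) (i : Fin n) (j : Fin d) : |z i j| ≤ znorm z :=
  calc |z i j| ≤ ‖z i‖ := PiLp.norm_apply_le (z i) j
    _ ≤ znorm z := Real.le_sqrt_of_sq_le <|
      Finset.single_le_sum (f := fun i => ‖z i‖ ^ 2) (fun _ _ => sq_nonneg _) (Finset.mem_univ i)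

lemma sum_hess_column_sq_le (H : Fin n → Matrix (Fin d) (Fin d) ℝ) (j : Fin d) :
    ∑ k, ∑ l, H k l j ^ 2 ≤ hnorm H ^ 2 := by
  rw [hnorm, Real.sq_sqrt (by positivity)]
  gcongr with k _ l _
  exact Finset.single_le_sum (f := fun m => H k l m ^ 2) (fun _ _ => sq_nonneg _)
    (Finset.mem_univ j)

lemma abs_apply_le_hnorm (H : Fin n → Matrix (Fin d) (Fin d) ℝ) (i : Fin n) (j l : Fin d) :
    |H i j l| ≤ hnorm H := by
  refine abs_le_of_sq_le_sq ((?_ : H i j l ^ 2 ≤ _).trans (sum_hess_column_sq_le H l))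
    (hnorm_nonneg H)
  calc H i j l ^ 2 ≤ ∑ j, H i j l ^ 2 :=
        Finset.single_le_sum (f := fun j => H i j l ^ 2) (fun _ _ => sq_nonneg _)
          (Finset.mem_univ j)
    _ ≤ ∑ i, ∑ j, H i j l ^ 2 :=
        Finset.single_le_sum (f := fun i => ∑ j, H i j l ^ 2)
          (fun _ _ => Finset.sum_nonneg fun _ _ => sq_nonneg _) (Finset.mem_univ i)

lemma abs_sum_grad_mul_hess_le (z : Fin n → Ed d) (H : Fin n → Matrix (Fin d) (Fin d) ℝ)
    (j : Fin d) : |∑ k, ∑ l, z k l * H k l j| ≤ znorm z * hnorm H := by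
  refine abs_le_of_sq_le_sq ?_ (mul_nonneg (znorm_nonneg z) (hnorm_nonneg H))
  have cauchySchwarz := Finset.sum_mul_sq_le_sq_mul_sq Finset.univ
    (fun q : Fin n × Fin d => z q.1 q.2) fun q => H q.1 q.2 j
  simp only [Fintype.sum_prod_type, ← znorm_sq] at cauchySchwarz
  calc (∑ k, ∑ l, z k l * H k l j) ^ 2
      ≤ znorm z ^ 2 * ∑ k, ∑ l, H k l j ^ 2 := cauchySchwarz
    _ ≤ znorm z ^ 2 * hnorm H ^ 2 := by gcongr; exact sum_hess_column_sq_le H j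
    _ = (znorm z * hnorm H) ^ 2 := (mul_pow _ _ 2).symm

lemma continuous_znorm : Continuous (znorm : (Fin n → Ed d) → ℝ) := by
  unfold znorm
  fun_prop

lemma continuous_hnorm : Continuous (hnorm : (Fin n → Matrix (Fin d) (Fin d) ℝ) → ℝ) := by
  refine Real.continuous_sqrt.comp <| continuous_finsetSum _ fun i _ =>
    continuous_finsetSum _ fun j _ => continuous_finsetSum _ fun l _ => ?_
  exact ((continuous_apply i).matrix_elem j l).pow 2

end Norms

section Flux

variable {n d : ℕ}

/-- The regularized power `(1 + |z|²)^s` of the Euclidean norm of a gradient `z`. -/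
def gradWeight (s : ℝ) (z : Fin n → Ed d) : ℝ := (1 + znorm z ^ 2) ^ s

/-- The components `(1 + |z|²)^(p-1) z^i_j` of the regularized `2p`-Laplacian flux, against which
the gradient is tested. -/
def flux (p : ℝ) (z : Fin n → Ed d) (i : Fin n) (j : Fin d) : ℝ := gradWeight (p - 1) z * z i j

/-- The formal derivative `∂_j` of `flux p z i j`, where `H k l j` stands for `∂_j z^k_l`. -/
def fluxDeriv (p : ℝ) (z : Fin n → Ed d) (H : Fin n → Matrix (Fin d) (Fin d) ℝ) (i : Fin n)
    (j : Fin d) : ℝ :=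
  2 * (∑ k, ∑ l, z k l * H k l j) * (p - 1) * gradWeight (p - 2) z * z i j +
    gradWeight (p - 1) z * H i j j

lemma one_add_znorm_sq_pos (z : Fin n → Ed d) : 0 < 1 + znorm z ^ 2 := by positivity

lemma gradWeight_pos (s : ℝ) (z : Fin n → Ed d) : 0 < gradWeight s z :=
  Real.rpow_pos_of_pos (one_add_znorm_sq_pos z) s

lemma gradWeight_mul_one_add_sq (s : ℝ) (z : Fin n → Ed d) :
    gradWeight s z * (1 + znorm z ^ 2) = gradWeight (s + 1) z :=
  (Real.rpow_add_one (one_add_znorm_sq_pos z).ne' s).symm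

lemma gradWeight_mul_znorm_sq_le (s : ℝ) (z : Fin n → Ed d) :
    gradWeight s z * znorm z ^ 2 ≤ gradWeight (s + 1) z := by
  rw [← gradWeight_mul_one_add_sq]
  exact mul_le_mul_of_nonneg_left (by linarith) (gradWeight_pos s z).le

lemma gradWeight_sub_one_mul_le_add {p x : ℝ} (hp : 1 ≤ p) (hx : 0 ≤ x) (z : Fin n → Ed d) :
    gradWeight (p - 1) z * x ≤ x ^ p + gradWeight p z :=
  rpow_sub_one_mul_le_add hp hx (one_add_znorm_sq_pos z).le

lemma znorm_rpow_le_sum_flux_mul {p : ℝ} (hp : 1 ≤ p) (z : Fin n → Ed d) :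
    znorm z ^ (2 * p) ≤ ∑ i, ∑ j, flux p z i j * z i j := by
  have sum_eq : ∑ i, ∑ j, flux p z i j * z i j = gradWeight (p - 1) z * znorm z ^ 2 := by
    simp only [flux, znorm_sq, Finset.mul_sum, mul_assoc, ← sq]
  have hp0 : p - 1 + 1 ≠ 0 := by linarith
  calc znorm z ^ (2 * p)
      = (znorm z ^ 2) ^ (p - 1) * znorm z ^ 2 := by
        rw [← Real.rpow_add_one' (sq_nonneg _) hp0, sub_add_cancel,
          Real.rpow_mul (znorm_nonneg z), Real.rpow_two]
    _ ≤ gradWeight (p - 1) z * znorm z ^ 2 := by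
        unfold gradWeight
        gcongr
        linarith
    _ = ∑ i, ∑ j, flux p z i j * z i j := sum_eq.symm

lemma flux_mul_self_nonneg (p : ℝ) (z : Fin n → Ed d) (i : Fin n) (j : Fin d) :
    0 ≤ flux p z i j * z i j := by
  rw [flux, mul_assoc]
  exact mul_nonneg (gradWeight_pos _ z).le (mul_self_nonneg _)

lemma abs_flux_le (p : ℝ) (z : Fin n → Ed d) (i : Fin n) (j : Fin d) :
    |flux p z i j| ≤ gradWeight (p - 1) z * znorm z := by
  rw [flux, abs_mul, abs_of_pos (gradWeight_pos _ z)]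
  exact mul_le_mul_of_nonneg_left (abs_apply_le_znorm z i j) (gradWeight_pos _ z).le

lemma abs_fluxDeriv_le {p : ℝ} (hp : 1 ≤ p) (z : Fin n → Ed d)
    (H : Fin n → Matrix (Fin d) (Fin d) ℝ) (i : Fin n) (j : Fin d) :
    |fluxDeriv p z H i j| ≤ (2 * p - 1) * (gradWeight (p - 1) z * hnorm H) := by
  have hp1 : 0 ≤ p - 1 := by linarith
  have hZ := znorm_nonneg z
  have hH := hnorm_nonneg H
  have weight_term : |2 * (∑ k, ∑ l, z k l * H k l j) * (p - 1) * gradWeight (p - 2) z * z i j| ≤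
      2 * (p - 1) * (gradWeight (p - 1) z * hnorm H) :=
    calc |2 * (∑ k, ∑ l, z k l * H k l j) * (p - 1) * gradWeight (p - 2) z * z i j|
        = 2 * |∑ k, ∑ l, z k l * H k l j| * (p - 1) * gradWeight (p - 2) z * |z i j| := by
          simp only [abs_mul, abs_two, abs_of_nonneg hp1, abs_of_pos (gradWeight_pos _ z)]
      _ ≤ 2 * (znorm z * hnorm H) * (p - 1) * gradWeight (p - 2) z * znorm z := by
          have hw := (gradWeight_pos (p - 2) z).le
          gcongr
          exacts [abs_sum_grad_mul_hess_le z H j, abs_apply_le_znorm z i j]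
      _ = 2 * (p - 1) * (gradWeight (p - 2) z * znorm z ^ 2 * hnorm H) := by ring
      _ ≤ 2 * (p - 1) * (gradWeight (p - 1) z * hnorm H) := by
          gcongr
          have hle := gradWeight_mul_znorm_sq_le (p - 2) z
          rwa [show p - 2 + 1 = p - 1 by ring] at hle
  have hess_term : |gradWeight (p - 1) z * H i j j| ≤ gradWeight (p - 1) z * hnorm H := by
    rw [abs_mul, abs_of_pos (gradWeight_pos _ z)]
    exact mul_le_mul_of_nonneg_left (abs_apply_le_hnorm H i j j) (gradWeight_pos _ z).le
  calc |fluxDeriv p z H i j| ≤ _ := abs_add_le _ _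
    _ ≤ 2 * (p - 1) * (gradWeight (p - 1) z * hnorm H) + gradWeight (p - 1) z * hnorm H :=
        add_le_add weight_term hess_term
    _ = (2 * p - 1) * (gradWeight (p - 1) z * hnorm H) := by ring

lemma gradWeight_sub_one_mul_znorm_le {p M : ℝ} (hp : 1 ≤ p) (z : Fin n → Ed d) :
    M * (gradWeight (p - 1) z * znorm z) ≤ (M ^ 2) ^ p + 2 * gradWeight p z := by
  have hw := (gradWeight_pos (p - 1) z).le
  calc M * (gradWeight (p - 1) z * znorm z)
      = gradWeight (p - 1) z * (M * znorm z) := by ring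
    _ ≤ gradWeight (p - 1) z * (M ^ 2 + znorm z ^ 2) := by
        gcongr
        nlinarith [two_mul_le_add_sq M (znorm z), sq_nonneg M, sq_nonneg (znorm z)]
    _ = gradWeight (p - 1) z * M ^ 2 + gradWeight (p - 1) z * znorm z ^ 2 := mul_add _ _ _
    _ ≤ ((M ^ 2) ^ p + gradWeight p z) + gradWeight p z := by
        gcongr
        · exact gradWeight_sub_one_mul_le_add hp (sq_nonneg M) z
        · simpa only [sub_add_cancel] using gradWeight_mul_znorm_sq_le (p - 1) z
    _ = (M ^ 2) ^ p + 2 * gradWeight p z := by ring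

lemma abs_cutoff_flux_deriv_le {p η η' M : ℝ} (hp : 1 ≤ p) (hη : η ∈ Icc (0 : ℝ) 1)
    (hη' : |η'| ≤ M) (z : Fin n → Ed d) (H : Fin n → Matrix (Fin d) (Fin d) ℝ) (i : Fin n)
    (j : Fin d) :
    |η' * flux p z i j + η * fluxDeriv p z H i j| ≤
      (2 * p + 1) * 2 ^ p * (hnorm H ^ p + znorm z ^ (2 * p) + 1) + (M ^ 2) ^ p := by
  have hM : 0 ≤ M := (abs_nonneg η').trans hη'
  have hHp : 0 ≤ hnorm H ^ p := Real.rpow_nonneg (hnorm_nonneg H) p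
  have hpow : 1 ≤ (2 : ℝ) ^ p := Real.one_le_rpow (by norm_num) (by linarith)
  have cutoff_term : |η' * flux p z i j| ≤ (M ^ 2) ^ p + 2 * gradWeight p z := by
    rw [abs_mul]
    calc |η'| * |flux p z i j| ≤ M * (gradWeight (p - 1) z * znorm z) := by
          gcongr
          exact abs_flux_le p z i j
      _ ≤ _ := gradWeight_sub_one_mul_znorm_le hp z
  have flux_term : |η * fluxDeriv p z H i j| ≤ (2 * p - 1) * (hnorm H ^ p + gradWeight p z) := by
    rw [abs_mul, abs_of_nonneg hη.1]
    calc η * |fluxDeriv p z H i j| ≤ |fluxDeriv p z H i j| :=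
          mul_le_of_le_one_left (abs_nonneg _) hη.2
      _ ≤ (2 * p - 1) * (gradWeight (p - 1) z * hnorm H) := abs_fluxDeriv_le hp z H i j
      _ ≤ (2 * p - 1) * (hnorm H ^ p + gradWeight p z) := by
          gcongr
          exacts [by linarith, gradWeight_sub_one_mul_le_add hp (hnorm_nonneg H) z]
  calc |η' * flux p z i j + η * fluxDeriv p z H i j|
      ≤ ((M ^ 2) ^ p + 2 * gradWeight p z) + (2 * p - 1) * (hnorm H ^ p + gradWeight p z) :=
        (abs_add_le _ _).trans (add_le_add cutoff_term flux_term)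
    _ = (2 * p - 1) * hnorm H ^ p + (2 * p + 1) * gradWeight p z + (M ^ 2) ^ p := by ring
    _ ≤ (2 * p + 1) * (2 ^ p * hnorm H ^ p) +
          (2 * p + 1) * (2 ^ p * (1 + znorm z ^ (2 * p))) + (M ^ 2) ^ p := by
        gcongr
        · linarith
        · exact le_mul_of_one_le_left hHp hpow
        · exact one_add_sq_rpow_le (by linarith) (znorm_nonneg z)
    _ = _ := by ring

lemma continuous_gradWeight (s : ℝ) : Continuous (gradWeight s : (Fin n → Ed d) → ℝ) :=
  (continuous_const.add (continuous_znorm.pow 2)).rpow_const fun z =>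
    Or.inl (one_add_znorm_sq_pos z).ne'

lemma continuous_flux_comp {X : Type*} [TopologicalSpace X] {z : X → Fin n → Ed d}
    (hz : Continuous z) (p : ℝ) (i : Fin n) (j : Fin d) : Continuous fun x => flux p (z x) i j :=
  ((continuous_gradWeight _).comp hz).mul (by fun_prop)

lemma continuous_fluxDeriv_comp {X : Type*} [TopologicalSpace X] {z : X → Fin n → Ed d}
    {H : X → Fin n → Matrix (Fin d) (Fin d) ℝ} (hz : Continuous z) (hH : Continuous H) (p : ℝ)
    (i : Fin n) (j : Fin d) : Continuous fun x => fluxDeriv p (z x) (H x) i j := by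
  have cont_hess : ∀ k l m, Continuous fun x => H x k l m := fun k l m =>
    ((continuous_apply k).comp hH).matrix_elem l m
  have cont_weight : ∀ s, Continuous fun x => gradWeight s (z x) := fun s =>
    (continuous_gradWeight s).comp hz
  have cont_sum : Continuous fun x => ∑ k, ∑ l, z x k l * H x k l j :=
    continuous_finsetSum _ fun k _ => continuous_finsetSum _ fun l _ =>
      Continuous.mul (by fun_prop) (cont_hess k l j)
  exact ((((continuous_const.mul cont_sum).mul continuous_const).mul (cont_weight _)).mul
    (by fun_prop)).add ((cont_weight _).mul (cont_hess i j j))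

end Flux

section SecondOrder

variable {n d : ℕ} {v : Ed d → EuclideanSpace ℝ (Fin n)} {Dv : Ed d → Fin n → Ed d}
  {D2v : Ed d → Fin n → Matrix (Fin d) (Fin d) ℝ}

/-- `v` is twice continuously differentiable, with gradients `Dv` and Hessians `D2v`, where
`D2v x i j l` is the derivative of `Dv x i j` in direction `l`. -/
structure HasC2Derivs (v : Ed d → EuclideanSpace ℝ (Fin n)) (Dv : Ed d → Fin n → Ed d)
    (D2v : Ed d → Fin n → Matrix (Fin d) (Fin d) ℝ) : Prop where
  continuous_grad : Continuous Dv
  continuous_hess : Continuous D2v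
  hasGradientAt : ∀ x i, HasGradientAt (fun y => v y i) (Dv x i) x
  hasGradientAt_grad : ∀ x i j, HasGradientAt (fun y => Dv y i j)
    ((EuclideanSpace.equiv (Fin d) ℝ).symm (D2v x i j)) x

lemma hasLineDerivAt_single_of_hasGradientAt {f : Ed d → ℝ} {g x : Ed d}
    (h : HasGradientAt f g x) (j : Fin d) :
    HasLineDerivAt ℝ f (g j) x (EuclideanSpace.single j 1) := by
  simpa [EuclideanSpace.inner_single_right] using
    h.hasFDerivAt.hasLineDerivAt (EuclideanSpace.single j 1)

lemma integral_mul_mul_eq_neg_of_hasLineDerivAt {E : Type*} [NormedAddCommGroup E]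
    [NormedSpace ℝ E] [FiniteDimensional ℝ E] [MeasurableSpace E] [BorelSpace E] {μ : Measure E}
    [μ.IsAddHaarMeasure] {η f f' g g' : E → ℝ} {e : E} (hη : ContDiff ℝ 1 η)
    (hsupp : HasCompactSupport η) (hf : Continuous f) (hf' : Continuous f') (hg : Continuous g)
    (hg' : Continuous g') (hff' : ∀ x, HasLineDerivAt ℝ f (f' x) x e)
    (hgg' : ∀ x, HasLineDerivAt ℝ g (g' x) x e) :
    ∫ x, η x * (f x * g' x) ∂μ = -∫ x, (fderiv ℝ η x e * f x + η x * f' x) * g x ∂μ := by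
  have cont_η' : Continuous fun x => fderiv ℝ η x e :=
    (hη.continuous_fderiv one_ne_zero).clm_apply continuous_const
  have hasLineDerivAt_mul : ∀ x, HasLineDerivAt ℝ (fun y => η y * f y)
      (fderiv ℝ η x e * f x + η x * f' x) x e := fun x => by
    have hηx := (hη.differentiable one_ne_zero x).hasFDerivAt.hasLineDerivAt e
    simpa only [HasLineDerivAt, zero_smul, add_zero] using HasDerivAt.fun_mul hηx (hff' x)
  have integrable_deriv_mul : Integrable (fun x => (fderiv ℝ η x e * f x + η x * f' x) * g x) μ :=
    (((cont_η'.mul hf).add (hη.continuous.mul hf')).mul hg).integrable_of_hasCompactSupport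
      (((hsupp.fderiv_apply ℝ e).mul_right.add hsupp.mul_right).mul_right)
  have integrable_mul : ∀ {k : E → ℝ}, Continuous k → Integrable (fun x => η x * f x * k x) μ :=
    fun hk => ((hη.continuous.mul hf).mul hk).integrable_of_hasCompactSupport
      hsupp.mul_right.mul_right
  simp only [← mul_assoc (η _)]
  exact integral_bilinear_hasLineDerivAt_right_eq_neg_left_of_integrable
    (B := ContinuousLinearMap.mul ℝ ℝ) integrable_deriv_mul (integrable_mul hg')
    (integrable_mul hg) (fun x _ => hasLineDerivAt_mul x) fun x _ => hgg' x

namespace HasC2Derivs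

lemma continuous_apply (h : HasC2Derivs v Dv D2v) (i : Fin n) : Continuous fun x => v x i :=
  continuous_iff_continuousAt.2 fun x => (h.hasGradientAt x i).continuousAt

lemma continuous_grad_apply (h : HasC2Derivs v Dv D2v) (i : Fin n) (j : Fin d) :
    Continuous fun x => Dv x i j := by
  have := h.continuous_grad
  fun_prop

lemma hasLineDerivAt (h : HasC2Derivs v Dv D2v) (x : Ed d) (i : Fin n) (j : Fin d) :
    HasLineDerivAt ℝ (fun y => v y i) (Dv x i j) x (EuclideanSpace.single j 1) :=
  hasLineDerivAt_single_of_hasGradientAt (h.hasGradientAt x i) j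

lemma hasLineDerivAt_grad (h : HasC2Derivs v Dv D2v) (x : Ed d) (i : Fin n) (j l : Fin d) :
    HasLineDerivAt ℝ (fun y => Dv y i j) (D2v x i j l) x (EuclideanSpace.single l 1) :=
  hasLineDerivAt_single_of_hasGradientAt (h.hasGradientAt_grad x i j) l

lemma hasLineDerivAt_one_add_znorm_sq (h : HasC2Derivs v Dv D2v) (x : Ed d) (j : Fin d) :
    HasLineDerivAt ℝ (fun y => 1 + znorm (Dv y) ^ 2)
      (2 * ∑ k, ∑ l, Dv x k l * D2v x k l j) x (EuclideanSpace.single j 1) := by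
  have hsum := HasDerivAt.const_add (1 : ℝ) <| HasDerivAt.fun_sum (u := Finset.univ) fun k _ =>
    HasDerivAt.fun_sum (u := Finset.univ) fun l _ =>
      HasDerivAt.fun_pow (h.hasLineDerivAt_grad x k l j) 2
  simp only [HasLineDerivAt, znorm_sq]
  convert hsum using 1
  simp [Finset.mul_sum, mul_assoc]

lemma hasLineDerivAt_flux (h : HasC2Derivs v Dv D2v) (p : ℝ) (x : Ed d) (i : Fin n)
    (j : Fin d) :
    HasLineDerivAt ℝ (fun y => flux p (Dv y) i j) (fluxDeriv p (Dv x) (D2v x) i j) x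
      (EuclideanSpace.single j 1) := by
  have hweight := HasDerivAt.rpow_const (p := p - 1) (h.hasLineDerivAt_one_add_znorm_sq x j)
    (Or.inl (one_add_znorm_sq_pos _).ne')
  have hflux := HasDerivAt.fun_mul hweight (h.hasLineDerivAt_grad x i j j)
  simp only [zero_smul, add_zero, sub_sub, one_add_one_eq_two] at hflux
  exact hflux

lemma integral_mul_flux_mul_grad (h : HasC2Derivs v Dv D2v) {η : Ed d → ℝ}
    (hη : ContDiff ℝ 1 η) (hsupp : HasCompactSupport η) (p c : ℝ) (i : Fin n) (j : Fin d) :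
    ∫ x, η x * (flux p (Dv x) i j * Dv x i j) =
      -∫ x, (fderiv ℝ η x (EuclideanSpace.single j 1) * flux p (Dv x) i j +
        η x * fluxDeriv p (Dv x) (D2v x) i j) * (v x i - c) := by
  have hasLineDerivAt_sub : ∀ x, HasLineDerivAt ℝ (fun y => v y i - c) (Dv x i j) x
      (EuclideanSpace.single j 1) := fun x => HasDerivAt.sub_const c (h.hasLineDerivAt x i j)
  exact integral_mul_mul_eq_neg_of_hasLineDerivAt hη hsupp
    (continuous_flux_comp h.continuous_grad p i j)
    (continuous_fluxDeriv_comp h.continuous_grad h.continuous_hess p i j)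
    ((h.continuous_apply i).sub continuous_const) (h.continuous_grad_apply i j)
    (fun x => h.hasLineDerivAt_flux p x i j) hasLineDerivAt_sub

end HasC2Derivs

end SecondOrder

section Cutoff

variable {E : Type*} [NormedAddCommGroup E] [NormedSpace ℝ E]

/-- `η` is a `C¹` cutoff function: it takes values in `[0, 1]`, equals `1` on `K`, is supported
in `Ω` and has gradient bounded by `M`. -/
structure IsCutoff (η : E → ℝ) (K Ω : Set E) (M : ℝ) : Prop where
  contDiff : ContDiff ℝ 1 η
  mem_Icc : ∀ x, η x ∈ Icc (0 : ℝ) 1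
  eqOn_one : EqOn η 1 K
  tsupport_subset : tsupport η ⊆ Ω
  norm_fderiv_le : ∀ x, ‖fderiv ℝ η x‖ ≤ M

lemma IsCutoff.hasCompactSupport [ProperSpace E] {η : E → ℝ} {K Ω : Set E} {M : ℝ}
    (hη : IsCutoff η K Ω M) (hΩ : Bornology.IsBounded Ω) : HasCompactSupport η :=
  hΩ.isCompact_closure.of_isClosed_subset (isClosed_tsupport η)
    (hη.tsupport_subset.trans subset_closure)

lemma exists_forall_isCutoff_ball [FiniteDimensional ℝ E] {r s : ℝ} (hr : 0 < r) (hrs : r < s) :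
    ∃ M : ℝ, ∀ x₀ : E, ∃ η : E → ℝ, IsCutoff η (Metric.ball x₀ r) (Metric.ball x₀ s) M := by
  let f : ContDiffBump (0 : E) := ⟨r, (r + s) / 2, hr, by linarith⟩
  have hf : ContDiff ℝ 1 f := f.contDiff
  obtain ⟨M, hM⟩ := (hf.continuous_fderiv one_ne_zero).bounded_above_of_compact_support
    (f.hasCompactSupport.fderiv ℝ)
  refine ⟨M, fun x₀ => ⟨fun x => f (x - x₀), hf.comp (contDiff_id.sub contDiff_const),
    fun x => ⟨f.nonneg, f.le_one⟩, fun x hx => ?_, ?_, fun x => ?_⟩⟩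
  · refine f.one_of_mem_closedBall ?_
    rw [mem_closedBall_zero_iff]
    exact (mem_ball_iff_norm.1 hx).le
  · have tsupport_eq : tsupport (fun x => f (x - x₀)) = (· - x₀) ⁻¹' tsupport f :=
      tsupport_comp_eq_preimage f (Homeomorph.subRight x₀)
    rw [tsupport_eq, f.tsupport_eq]
    intro x hx
    rw [mem_preimage, mem_closedBall_zero_iff] at hx
    rw [mem_ball_iff_norm]
    exact hx.trans_lt (show (r + s) / 2 < s by linarith)
  · rw [fderiv_comp_sub]
    exact hM _

end Cutoff

section Energy

variable {n d : ℕ} {v : Ed d → EuclideanSpace ℝ (Fin n)} {Dv : Ed d → Fin n → Ed d}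
  {D2v : Ed d → Fin n → Matrix (Fin d) (Fin d) ℝ} {η : Ed d → ℝ} {K Ω : Set (Ed d)}
  {p M W : ℝ}

lemma integrableOn_of_continuous_of_isBounded {X : Type*} [MetricSpace X] [ProperSpace X]
    [MeasurableSpace X] [OpensMeasurableSpace X] {μ : Measure X} [IsFiniteMeasureOnCompacts μ]
    {f : X → ℝ} {s : Set X} (hf : Continuous f) (hs : Bornology.IsBounded s) :
    IntegrableOn f s μ :=
  (hf.continuousOn.integrableOn_compact hs.isCompact_closure).mono_set subset_closure

namespace HasC2Derivs

lemma continuous_hnorm_rpow (h : HasC2Derivs v Dv D2v) (hp : 0 ≤ p) :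
    Continuous fun x => hnorm (D2v x) ^ p :=
  (continuous_hnorm.comp h.continuous_hess).rpow_const fun _ => Or.inr hp

lemma continuous_znorm_rpow (h : HasC2Derivs v Dv D2v) (hp : 0 ≤ p) :
    Continuous fun x => znorm (Dv x) ^ p :=
  (continuous_znorm.comp h.continuous_grad).rpow_const fun _ => Or.inr hp

lemma integral_mul_flux_mul_grad_le (h : HasC2Derivs v Dv D2v) (hη : IsCutoff η K Ω M)
    (hΩ : Bornology.IsBounded Ω) (hΩm : MeasurableSet Ω) (hp : 1 ≤ p) {c : ℝ} {i : Fin n}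
    (hW : ∀ x ∈ Ω, |v x i - c| ≤ W) (j : Fin d) :
    ∫ x, η x * (flux p (Dv x) i j * Dv x i j) ≤
      W * ∫ x in Ω, ((2 * p + 1) * 2 ^ p * (hnorm (D2v x) ^ p + znorm (Dv x) ^ (2 * p) + 1) +
        (M ^ 2) ^ p) := by
  set f' : Ed d → ℝ := fun x => fderiv ℝ η x (EuclideanSpace.single j 1) * flux p (Dv x) i j +
    η x * fluxDeriv p (Dv x) (D2v x) i j
  have f'_eq_zero : ∀ x ∉ Ω, f' x = 0 := fun x hx => by
    have hx' : x ∉ tsupport η := fun hmem => hx (hη.tsupport_subset hmem)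
    simp [f', fderiv_of_notMem_tsupport ℝ hx', image_eq_zero_of_notMem_tsupport hx']
  have abs_f'_le : ∀ x, |f' x| ≤ (2 * p + 1) * 2 ^ p *
      (hnorm (D2v x) ^ p + znorm (Dv x) ^ (2 * p) + 1) + (M ^ 2) ^ p := fun x => by
    refine abs_cutoff_flux_deriv_le hp (hη.mem_Icc x) ?_ (Dv x) (D2v x) i j
    calc |fderiv ℝ η x (EuclideanSpace.single j 1)|
        ≤ ‖fderiv ℝ η x‖ * ‖EuclideanSpace.single j (1 : ℝ)‖ := (fderiv ℝ η x).le_opNorm _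
      _ ≤ M := by simpa using hη.norm_fderiv_le x
  have cont_bound : Continuous fun x => (2 * p + 1) * 2 ^ p *
      (hnorm (D2v x) ^ p + znorm (Dv x) ^ (2 * p) + 1) + (M ^ 2) ^ p := by
    have hH := h.continuous_hnorm_rpow (p := p) (by linarith)
    have hS := h.continuous_znorm_rpow (p := 2 * p) (by linarith)
    fun_prop
  calc ∫ x, η x * (flux p (Dv x) i j * Dv x i j)
      = -∫ x, f' x * (v x i - c) :=
        h.integral_mul_flux_mul_grad hη.contDiff (hη.hasCompactSupport hΩ) p c i j
    _ = -∫ x in Ω, f' x * (v x i - c) := by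
        rw [setIntegral_eq_integral_of_forall_compl_eq_zero fun x hx => by
          rw [f'_eq_zero x hx, zero_mul]]
    _ ≤ ∫ x in Ω, |f' x * (v x i - c)| := (neg_le_abs _).trans abs_integral_le_integral_abs
    _ ≤ ∫ x in Ω, W * ((2 * p + 1) * 2 ^ p *
          (hnorm (D2v x) ^ p + znorm (Dv x) ^ (2 * p) + 1) + (M ^ 2) ^ p) := by
        refine integral_mono_of_nonneg (ae_of_all _ fun _ => abs_nonneg _)
          (integrableOn_of_continuous_of_isBounded (cont_bound.const_mul W) hΩ)
          (ae_restrict_of_forall_mem hΩm fun x hx => ?_)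
        calc |f' x * (v x i - c)| = |v x i - c| * |f' x| := by rw [abs_mul, mul_comm]
          _ ≤ W * _ := mul_le_mul (hW x hx) (abs_f'_le x) (abs_nonneg _)
            ((abs_nonneg _).trans (hW x hx))
    _ = _ := integral_const_mul _ _

lemma setIntegral_znorm_rpow_le (h : HasC2Derivs v Dv D2v) (hη : IsCutoff η K Ω M)
    (hK : MeasurableSet K) (hΩ : Bornology.IsBounded Ω) (hΩm : MeasurableSet Ω) (hp : 1 ≤ p)
    {c : Fin n → ℝ} (hW : ∀ x ∈ Ω, ∀ i, |v x i - c i| ≤ W) :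
    ∫ x in K, znorm (Dv x) ^ (2 * p) ≤
      n * d * (W * ∫ x in Ω, ((2 * p + 1) * 2 ^ p *
        (hnorm (D2v x) ^ p + znorm (Dv x) ^ (2 * p) + 1) + (M ^ 2) ^ p)) := by
  have integrable_term : ∀ i j,
      Integrable fun x => η x * (flux p (Dv x) i j * Dv x i j) := fun i j =>
    (hη.contDiff.continuous.mul ((continuous_flux_comp h.continuous_grad p i j).mul
      (h.continuous_grad_apply i j))).integrable_of_hasCompactSupport
        (hη.hasCompactSupport hΩ).mul_right
  have integrable_sum :
      Integrable fun x => ∑ i, ∑ j, η x * (flux p (Dv x) i j * Dv x i j) :=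
    integrable_finsetSum _ fun i _ => integrable_finsetSum _ fun j _ => integrable_term i j
  calc ∫ x in K, znorm (Dv x) ^ (2 * p)
      ≤ ∫ x in K, ∑ i, ∑ j, η x * (flux p (Dv x) i j * Dv x i j) := by
        refine integral_mono_of_nonneg (ae_of_all _ fun _ => Real.rpow_nonneg (znorm_nonneg _) _)
          integrable_sum.integrableOn (ae_restrict_of_forall_mem hK fun x hx => ?_)
        simpa only [hη.eqOn_one hx, Pi.one_apply, one_mul] using
          znorm_rpow_le_sum_flux_mul hp (Dv x)
    _ ≤ ∫ x, ∑ i, ∑ j, η x * (flux p (Dv x) i j * Dv x i j) :=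
        setIntegral_le_integral integrable_sum <| ae_of_all _ fun x =>
          Finset.sum_nonneg fun i _ => Finset.sum_nonneg fun j _ =>
            mul_nonneg (hη.mem_Icc x).1 (flux_mul_self_nonneg p (Dv x) i j)
    _ = ∑ i, ∑ j, ∫ x, η x * (flux p (Dv x) i j * Dv x i j) := by
        rw [integral_finsetSum _ fun i _ => integrable_finsetSum _ fun j _ => integrable_term i j]
        exact Finset.sum_congr rfl fun i _ => integral_finsetSum _ fun j _ => integrable_term i j
    _ ≤ ∑ _i : Fin n, ∑ _j : Fin d, W * ∫ x in Ω, ((2 * p + 1) * 2 ^ p *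
          (hnorm (D2v x) ^ p + znorm (Dv x) ^ (2 * p) + 1) + (M ^ 2) ^ p) :=
        Finset.sum_le_sum fun i _ => Finset.sum_le_sum fun j _ =>
          h.integral_mul_flux_mul_grad_le hη hΩ hΩm hp (fun x hx => hW x hx i) j
    _ = _ := by simp [mul_assoc]

end HasC2Derivs

lemma abs_apply_sub_le_of_holder {A α r : ℝ} (hA : 0 ≤ A) (hα : 0 ≤ α)
    (hv : ∀ x x', ‖v x - v x'‖ ≤ A * ‖x - x'‖ ^ α) {x₀ x : Ed d} (hx : x ∈ Metric.ball x₀ r)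
    (i : Fin n) : |v x i - v x₀ i| ≤ A * r ^ α :=
  calc |v x i - v x₀ i| ≤ ‖v x - v x₀‖ := PiLp.norm_apply_le (v x - v x₀) i
    _ ≤ A * ‖x - x₀‖ ^ α := hv x x₀
    _ ≤ A * r ^ α := by
        gcongr
        exact (mem_ball_iff_norm.1 hx).le

theorem exists_forall_setIntegral_ball_znorm_rpow_le (d n : ℕ) {p α A : ℝ} (hp : 1 ≤ p)
    (hα : 0 ≤ α) (hA : 0 ≤ A) :
    ∃ C : ℝ, ∀ R > 0, ∃ CR : ℝ, 0 ≤ CR ∧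
      ∀ (x₀ : Ed d) (v : Ed d → EuclideanSpace ℝ (Fin n)) (Dv : Ed d → Fin n → Ed d)
        (D2v : Ed d → Fin n → Matrix (Fin d) (Fin d) ℝ), HasC2Derivs v Dv D2v →
        (∀ x x', ‖v x - v x'‖ ≤ A * ‖x - x'‖ ^ α) →
        ∫ x in Metric.ball x₀ (2 * R), znorm (Dv x) ^ (2 * p) ≤
          C * R ^ α * (∫ x in Metric.ball x₀ (4 * R),
            (hnorm (D2v x) ^ p + znorm (Dv x) ^ (2 * p))) + CR := by
  obtain ⟨B, hB⟩ : ∃ B : ℝ, B = (2 * p + 1) * 2 ^ p := ⟨_, rfl⟩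
  refine ⟨n * d * (A * 4 ^ α * B), fun R hR => ?_⟩
  obtain ⟨M, hM⟩ := exists_forall_isCutoff_ball (E := Ed d) (r := 2 * R) (s := 4 * R)
    (by linarith) (by linarith)
  refine ⟨n * d * (A * (4 * R) ^ α *
    ((B + (M ^ 2) ^ p) * volume.real (Metric.ball (0 : Ed d) (4 * R)))), by rw [hB]; positivity,
    fun x₀ v Dv D2v h hv => ?_⟩
  obtain ⟨η, hη⟩ := hM x₀
  have integrable_energy : IntegrableOn (fun x => hnorm (D2v x) ^ p + znorm (Dv x) ^ (2 * p))
      (Metric.ball x₀ (4 * R)) :=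
    integrableOn_of_continuous_of_isBounded ((h.continuous_hnorm_rpow (by linarith)).add
      (h.continuous_znorm_rpow (by linarith))) Metric.isBounded_ball
  refine (h.setIntegral_znorm_rpow_le hη measurableSet_ball Metric.isBounded_ball
    measurableSet_ball hp fun x hx i => abs_apply_sub_le_of_holder hA hα hv hx i).trans_eq ?_
  have bound_eq : ∀ x, B * (hnorm (D2v x) ^ p + znorm (Dv x) ^ (2 * p) + 1) + (M ^ 2) ^ p =
      B * (hnorm (D2v x) ^ p + znorm (Dv x) ^ (2 * p)) + (B + (M ^ 2) ^ p) := fun x => by ring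
  simp only [← hB, bound_eq]
  rw [integral_add (integrable_energy.const_mul B) (integrableOn_const measure_ball_lt_top.ne),
    integral_const_mul, setIntegral_const, smul_eq_mul, Real.mul_rpow (by norm_num) hR.le,
    Measure.real, Measure.addHaar_ball_center, ← Measure.real]
  ring

end Energy

section Time

lemma integrable_prod_restrict_of_continuousOn_of_isBounded {S X : Type*} [MetricSpace S]
    [MeasurableSpace S] [OpensMeasurableSpace S] [MetricSpace X] [ProperSpace X]
    [MeasurableSpace X] [OpensMeasurableSpace X] {μ : Measure S} [IsFiniteMeasureOnCompacts μ]
    [SFinite μ] {ν : Measure X} [IsFiniteMeasureOnCompacts ν] {f : S × X → ℝ} {I : Set S}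
    {s : Set X} (hf : ContinuousOn f (I ×ˢ univ)) (hI : IsCompact I)
    (hs : Bornology.IsBounded s) : Integrable f ((μ.restrict I).prod (ν.restrict s)) := by
  rw [Measure.prod_restrict]
  exact ((hf.mono (prod_mono_right (subset_univ _))).integrableOn_compact
    (hI.prod hs.isCompact_closure)).mono_set (prod_mono_right subset_closure)

section Weight

variable {S X : Type*} [MeasurableSpace S] [MeasurableSpace X] {μ : Measure S} {w : S → ℝ}

lemma integrable_prod_weight_mul {ν : Measure X} {F : S × X → ℝ}
    (hw : AEStronglyMeasurable w μ) (hw01 : ∀ᵐ t ∂μ, w t ∈ Icc (0 : ℝ) 1)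
    (hF : Integrable F (μ.prod ν)) : Integrable (fun q => w q.1 * F q) (μ.prod ν) := by
  have norm_le_one : ∀ᵐ t ∂μ, ‖w t‖ ≤ 1 := hw01.mono fun t ht => by
    rw [Real.norm_of_nonneg ht.1]
    exact ht.2
  exact hF.bdd_mul hw.comp_fst (Measure.quasiMeasurePreserving_fst.ae norm_le_one)

lemma integral_prod_weight_mul_le [IsFiniteMeasure μ] {ν₁ ν₂ : Measure X} [SFinite ν₁]
    [SFinite ν₂] {F G : S × X → ℝ} {a b : ℝ} (hw : AEStronglyMeasurable w μ)
    (hw01 : ∀ᵐ t ∂μ, w t ∈ Icc (0 : ℝ) 1) (hF : Integrable F (μ.prod ν₁))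
    (hG : Integrable G (μ.prod ν₂)) (hb : 0 ≤ b)
    (h : ∀ᵐ t ∂μ, ∫ x, F (t, x) ∂ν₁ ≤ a * ∫ x, G (t, x) ∂ν₂ + b) :
    ∫ q, w q.1 * F q ∂μ.prod ν₁ ≤ a * ∫ q, w q.1 * G q ∂μ.prod ν₂ + μ.real univ * b := by
  have hwF := integrable_prod_weight_mul hw hw01 hF
  have hwG := integrable_prod_weight_mul hw hw01 hG
  have hwG_slices := hwG.integral_prod_left.const_mul a
  rw [integral_prod _ hwF, integral_prod _ hwG, ← integral_const_mul, ← smul_eq_mul (μ.real univ),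
    ← integral_const, ← integral_add hwG_slices (integrable_const b)]
  refine integral_mono_ae hwF.integral_prod_left (hwG_slices.add (integrable_const b)) ?_
  filter_upwards [hw01, h] with t ht hslice
  simp only [integral_const_mul]
  calc w t * ∫ x, F (t, x) ∂ν₁ ≤ w t * (a * ∫ x, G (t, x) ∂ν₂ + b) :=
        mul_le_mul_of_nonneg_left hslice ht.1
    _ = a * (w t * ∫ x, G (t, x) ∂ν₂) + w t * b := by ring
    _ ≤ a * (w t * ∫ x, G (t, x) ∂ν₂) + b := by
        gcongr
        exact mul_le_of_le_one_left hb ht.2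

end Weight

end Time

theorem stmt13_general (d n : ℕ) (p α A : ℝ) (hp : 1 ≤ p) (hα : 0 ≤ α) (hA : 0 ≤ A) :
    ∃ C : ℝ, ∀ T : ℝ, ∀ R > 0, ∃ CR : ℝ,
      ∀ (x0 : Ed d) (κ : ℝ → ℝ) (u : ℝ → Ed d → EuclideanSpace ℝ (Fin n))
        (Du : ℝ → Ed d → Fin n → Ed d)
        (D2u : ℝ → Ed d → Fin n → Matrix (Fin d) (Fin d) ℝ),
        Measurable κ → (∀ t ∈ Icc (0 : ℝ) T, κ t ∈ Icc (0 : ℝ) 1) →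
        ContinuousOn (fun q : ℝ × Ed d => Du q.1 q.2) (Icc 0 T ×ˢ univ) →
        ContinuousOn (fun q : ℝ × Ed d => D2u q.1 q.2) (Icc 0 T ×ˢ univ) →
        (∀ t ∈ Icc (0 : ℝ) T, ∀ (x : Ed d) (i : Fin n),
          HasGradientAt (fun x' => u t x' i) (Du t x i) x) →
        (∀ t ∈ Icc (0 : ℝ) T, ∀ (x : Ed d) (i : Fin n) (j : Fin d),
          HasGradientAt (fun x' => Du t x' i j)
            ((EuclideanSpace.equiv (Fin d) ℝ).symm (D2u t x i j)) x) →
        (∀ t ∈ Icc (0 : ℝ) T, ∀ x x' : Ed d, ‖u t x - u t x'‖ ≤ A * ‖x - x'‖ ^ α) →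
        ∫ q in Icc (0 : ℝ) T ×ˢ Metric.ball x0 (2 * R),
            κ q.1 ^ p * znorm (Du q.1 q.2) ^ (2 * p) ≤
          C * R ^ α *
            ((∫ q in Icc (0 : ℝ) T ×ˢ Metric.ball x0 (4 * R),
                κ q.1 ^ p * hnorm (D2u q.1 q.2) ^ p) +
             (∫ q in Icc (0 : ℝ) T ×ˢ Metric.ball x0 (4 * R),
                κ q.1 ^ p * znorm (Du q.1 q.2) ^ (2 * p))) + CR := by
  obtain ⟨C, hC⟩ := exists_forall_setIntegral_ball_znorm_rpow_le d n hp hα hA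
  refine ⟨C, fun T R hR => ?_⟩
  obtain ⟨CR, hCR, slice_le⟩ := hC R hR
  refine ⟨(volume.restrict (Icc 0 T)).real univ * CR,
    fun x0 κ u Du D2u hκ hκ01 cDu cD2u hDu hD2u hu => ?_⟩
  have hasC2Derivs : ∀ t ∈ Icc 0 T, HasC2Derivs (u t) (Du t) (D2u t) := fun t ht =>
    ⟨cDu.comp_continuous (.prodMk_right t) fun _ => ⟨ht, trivial⟩,
      cD2u.comp_continuous (.prodMk_right t) fun _ => ⟨ht, trivial⟩, hDu t ht, hD2u t ht⟩
  have weight_meas : AEStronglyMeasurable (fun t => κ t ^ p) (volume.restrict (Icc 0 T)) :=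
    (hκ.pow_const p).aestronglyMeasurable
  have weight_mem : ∀ᵐ t ∂volume.restrict (Icc 0 T), κ t ^ p ∈ Icc (0 : ℝ) 1 :=
    ae_restrict_of_forall_mem measurableSet_Icc fun t ht =>
      ⟨Real.rpow_nonneg (hκ01 t ht).1 p, Real.rpow_le_one (hκ01 t ht).1 (hκ01 t ht).2 (by linarith)⟩
  have integrable_grad : ∀ r, Integrable (fun q : ℝ × Ed d => znorm (Du q.1 q.2) ^ (2 * p))
      ((volume.restrict (Icc 0 T)).prod (volume.restrict (Metric.ball x0 r))) := fun _ =>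
    integrable_prod_restrict_of_continuousOn_of_isBounded
      ((continuous_znorm.comp_continuousOn cDu).rpow_const fun _ _ => Or.inr (by linarith))
      isCompact_Icc Metric.isBounded_ball
  have integrable_hess : Integrable (fun q : ℝ × Ed d => hnorm (D2u q.1 q.2) ^ p)
      ((volume.restrict (Icc 0 T)).prod (volume.restrict (Metric.ball x0 (4 * R)))) :=
    integrable_prod_restrict_of_continuousOn_of_isBounded
      ((continuous_hnorm.comp_continuousOn cD2u).rpow_const fun _ _ => Or.inr (by linarith))
      isCompact_Icc Metric.isBounded_ball
  simp only [Measure.volume_eq_prod, ← Measure.prod_restrict]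
  rw [← integral_add (integrable_prod_weight_mul weight_meas weight_mem integrable_hess)
    (integrable_prod_weight_mul weight_meas weight_mem (integrable_grad _))]
  simp only [← mul_add]
  exact integral_prod_weight_mul_le weight_meas weight_mem (integrable_grad _)
    (integrable_hess.add (integrable_grad _)) hCR <|
    ae_restrict_of_forall_mem measurableSet_Icc fun t ht =>
      slice_le x0 (u t) (Du t) (D2u t) (hasC2Derivs t ht) (hu t ht)

/-- The localized Bensoussan–Frehse integration-by-parts
inequality: there is `C = C(d,n,p,α,A)` and, for each `R ∈ (0,1]`, a constant
`C_R` (depending additionally on `R` and `T`), such that for every `x₀`, every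
smooth `κ : [0,T] → [0,1]` and every `u` bounded by `A` and `α`-Hölder in space
with constant `A`, twice continuously differentiable in `x`, with
`∫∫_{[0,T]×B_{4R}(x₀)} (|Du|^{2p} + |D²u|^p) < ∞`, one has
`∫∫_{[0,T]×B_{2R}} κ^p |Du|^{2p} ≤ C R^α (∫∫_{[0,T]×B_{4R}} κ^p |D²u|^p
+ ∫∫_{[0,T]×B_{4R}} κ^p |Du|^{2p}) + C_R`. -/
theorem stmt13 (d n : ℕ) (p α A : ℝ) (hp : 1 < p) (hα : α ∈ Ioo (0:ℝ) 1)
    (hA : 0 < A) :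
    ∃ C : ℝ, ∀ T : ℝ, 0 < T → ∀ R ∈ Ioc (0:ℝ) 1, ∃ CR : ℝ,
      ∀ (x0 : Ed d) (κ : ℝ → ℝ) (u : ℝ → Ed d → EuclideanSpace ℝ (Fin n))
        (Du : ℝ → Ed d → Fin n → Ed d)
        (D2u : ℝ → Ed d → Fin n → Matrix (Fin d) (Fin d) ℝ),
        -- `κ` is smooth with values in `[0,1]`
        ContDiff ℝ (⊤ : ℕ∞) κ → (∀ t, κ t ∈ Icc (0:ℝ) 1) →
        -- `u`, `Du`, `D2u` are continuous
        ContinuousOn (fun q : ℝ × Ed d => u q.1 q.2) (Icc 0 T ×ˢ univ) →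
        ContinuousOn (fun q : ℝ × Ed d => Du q.1 q.2) (Icc 0 T ×ˢ univ) →
        ContinuousOn (fun q : ℝ × Ed d => D2u q.1 q.2) (Icc 0 T ×ˢ univ) →
        -- `Du` and `D2u` are the first and second spatial derivatives of `u`
        (∀ t ∈ Icc (0:ℝ) T, ∀ (x : Ed d) (i : Fin n),
          HasGradientAt (fun x' => u t x' i) (Du t x i) x) →
        (∀ t ∈ Icc (0:ℝ) T, ∀ (x : Ed d) (i : Fin n) (j : Fin d),
          HasGradientAt (fun x' => Du t x' i j)
            ((EuclideanSpace.equiv (Fin d) ℝ).symm (D2u t x i j)) x) →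
        -- `‖u‖_∞ ≤ A` and `u` is `α`-Hölder in space with constant `A`
        (∀ t ∈ Icc (0:ℝ) T, ∀ x, ‖u t x‖ ≤ A) →
        (∀ t ∈ Icc (0:ℝ) T, ∀ x x' : Ed d, ‖u t x - u t x'‖ ≤ A * ‖x - x'‖ ^ α) →
        -- finiteness of the localized integrals
        IntegrableOn
          (fun q : ℝ × Ed d =>
            znorm (Du q.1 q.2) ^ (2 * p) + hnorm (D2u q.1 q.2) ^ p)
          (Icc (0:ℝ) T ×ˢ Metric.ball x0 (4 * R)) →
        ∫ q in Icc (0:ℝ) T ×ˢ Metric.ball x0 (2 * R),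
            κ q.1 ^ p * znorm (Du q.1 q.2) ^ (2 * p) ≤
          C * R ^ α *
            ((∫ q in Icc (0:ℝ) T ×ˢ Metric.ball x0 (4 * R),
                κ q.1 ^ p * hnorm (D2u q.1 q.2) ^ p) +
             (∫ q in Icc (0:ℝ) T ×ˢ Metric.ball x0 (4 * R),
                κ q.1 ^ p * znorm (Du q.1 q.2) ^ (2 * p))) + CR := by
  obtain ⟨C, hC⟩ := stmt13_general d n p α A hp.le hα.1.le hA.le
  exact ⟨C, fun T _ R hR => (hC T R hR.1).imp fun CR h x0 κ u Du D2u hκ hκ01 _ cDu cD2u hDu hD2u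
    _ hu _ => h x0 κ u Du D2u hκ.continuous.measurable (fun t _ => hκ01 t) cDu cD2u hDu hD2u hu⟩

end
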